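/- arXiv:0710.3871 — 2 statements merged into one kernel-verified Lean document; each statement's English description precedes it below -/
import Mathlib

section
/- Let k be a field, let F = F(k, X) be the free metabelian Lie algebra on a type X over k, and let (b_β)_{β ∈ B} be a family of elements of F whose images in the quotient vector space F/⁅F, F⁆ are linearly independent over k. Then the Lie algebra homomorphism φ : F(k, B) → F determined by φ(a_β) = b_β is injective; consequently the subalgebra of F generated by the b_β is a free metabelian Lie algebra of rank |B|. -/
/-- The free metabelian Lie algebra on `X` over `k`: the quotient of the free Lie algebra
on `X` by its second derived ideal `⁅⁅L,L⁆,⁅L,L⁆⁆`. -/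
abbrev FreeMetabelianLie (k : Type*) (X : Type*) [CommRing k] :=
  FreeLieAlgebra k X ⧸ LieAlgebra.derivedSeries k (FreeLieAlgebra k X) 2

/-- The image in the free metabelian Lie algebra of the generator `x`. -/
noncomputable def fmGen (k : Type*) {X : Type*} [CommRing k] (x : X) :
    FreeMetabelianLie k X :=
  LieSubmodule.Quotient.mk' _ (FreeLieAlgebra.of k x)

set_option linter.unusedSimpArgs false
open scoped TensorProduct
open Polynomial

namespace FMAux

/-- The quotient map as a Lie homomorphism. -/
noncomputable def proj (k X : Type*) [CommRing k] :
    FreeLieAlgebra k X →ₗ⁅k⁆ FreeMetabelianLie k X :=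
  { (LieSubmodule.Quotient.mk' (LieAlgebra.derivedSeries k (FreeLieAlgebra k X) 2) :
      FreeLieAlgebra k X →ₗ[k] FreeMetabelianLie k X) with
    map_lie' := fun {x y} => LieSubmodule.Quotient.mk_bracket _ x y }

theorem proj_surj (k X : Type*) [CommRing k] : Function.Surjective (proj k X) :=
  LieSubmodule.Quotient.surjective_mk' _

theorem proj_of (k : Type*) {X : Type*} [CommRing k] (x : X) :
    proj k X (FreeLieAlgebra.of k x) = fmGen k x := rfl

theorem free_ind {k X : Type*} [CommRing k] (K : LieSubalgebra k (FreeLieAlgebra k X))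
    (h : ∀ x, FreeLieAlgebra.of k x ∈ K) (w : FreeLieAlgebra k X) : w ∈ K := by
  have : K.incl.comp (FreeLieAlgebra.lift k (fun x => (⟨_, h x⟩ : K))) = LieHom.id := by
    ext x
    simp
  have h2 := LieHom.congr_fun this w
  simp only [LieHom.comp_apply, LieHom.id_apply] at h2
  rw [← h2]
  exact Subtype.property _

theorem fm_ind {k X : Type*} [CommRing k] (K : LieSubalgebra k (FreeMetabelianLie k X))
    (h : ∀ x, fmGen k x ∈ K) (w : FreeMetabelianLie k X) : w ∈ K := by
  obtain ⟨w, rfl⟩ := proj_surj k X w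
  exact free_ind (K.comap (proj k X)) h w

section gen
variable {k L M : Type*} [CommRing k] [LieRing L] [LieAlgebra k L] [LieRing M] [LieAlgebra k M]

theorem lie_span_ind {I J : LieIdeal k L} (S : Submodule k L)
    (h : ∀ x ∈ I, ∀ y ∈ J, ⁅x, y⁆ ∈ S) {w : L} (hw : w ∈ ⁅I, J⁆) : w ∈ S := by
  rw [← LieSubmodule.mem_toSubmodule, LieSubmodule.lieIdeal_oper_eq_linear_span'] at hw
  refine (Submodule.span_le.2 ?_) hw
  rintro _ ⟨x, hx, y, hy, rfl⟩
  exact h x hx y hy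

theorem D_one : LieAlgebra.derivedSeries k L 1 = ⁅(⊤ : LieIdeal k L), (⊤ : LieIdeal k L)⁆ := by
  simp

theorem D_two : LieAlgebra.derivedSeries k L 2 =
    ⁅LieAlgebra.derivedSeries k L 1, LieAlgebra.derivedSeries k L 1⁆ := by
  rw [LieAlgebra.derivedSeries_def, LieAlgebra.derivedSeries_def,
    LieAlgebra.derivedSeriesOfIdeal_succ]

theorem lie_mem_D_one (x y : L) : ⁅x, y⁆ ∈ LieAlgebra.derivedSeries k L 1 := by
  rw [D_one]
  exact LieSubmodule.lie_mem_lie (LieSubmodule.mem_top x) (LieSubmodule.mem_top y)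

theorem kills_D_two (f : L →ₗ⁅k⁆ M) (h : ∀ a b c d : M, ⁅⁅a, b⁆, ⁅c, d⁆⁆ = 0) {w : L}
    (hw : w ∈ LieAlgebra.derivedSeries k L 2) : f w = 0 := by
  rw [D_two] at hw
  have h1 : ∀ u ∈ LieAlgebra.derivedSeries k L 1, ∀ c d : M, ⁅f u, ⁅c, d⁆⁆ = 0 := by
    intro u hu c d
    rw [D_one] at hu
    let S : Submodule k L :=
      { carrier := {u | ⁅f u, ⁅c, d⁆⁆ = 0}
        add_mem' := by
          intro a b ha hb
          simp only [Set.mem_ofPred_eq] at ha hb ⊢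
          rw [map_add, add_lie, ha, hb, add_zero]
        zero_mem' := by simp
        smul_mem' := by
          intro t a ha
          simp only [Set.mem_ofPred_eq] at ha ⊢
          rw [map_smul, smul_lie, ha, smul_zero] }
    refine lie_span_ind S ?_ hu
    intro x _ y _
    change ⁅f ⁅x, y⁆, ⁅c, d⁆⁆ = 0
    rw [LieHom.map_lie, h]
  refine lie_span_ind (LinearMap.ker (f : L →ₗ[k] M)) ?_ hw
  intro u hu v hv
  change f ⁅u, v⁆ = 0
  rw [LieHom.map_lie]
  rw [D_one] at hv
  let S : Submodule k L :=
    { carrier := {v | ⁅f u, f v⁆ = 0}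
      add_mem' := by
        intro a b ha hb
        simp only [Set.mem_ofPred_eq] at ha hb ⊢
        rw [map_add, lie_add, ha, hb, add_zero]
      zero_mem' := by simp
      smul_mem' := by
        intro t a ha
        simp only [Set.mem_ofPred_eq] at ha ⊢
        rw [map_smul, lie_smul, ha, smul_zero] }
  refine lie_span_ind S ?_ hv
  intro x _ y _
  change ⁅f u, f ⁅x, y⁆⁆ = 0
  rw [LieHom.map_lie, h1 u hu]

theorem exists_lift {X : Type*} (h : ∀ a b c d : M, ⁅⁅a, b⁆, ⁅c, d⁆⁆ = 0) (g : X → M) :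
    ∃ f : FreeMetabelianLie k X →ₗ⁅k⁆ M, ∀ x, f (fmGen k x) = g x := by
  let f0 := FreeLieAlgebra.lift k g
  let f1 : FreeMetabelianLie k X →ₗ[k] M :=
    Submodule.liftQ (LieAlgebra.derivedSeries k (FreeLieAlgebra k X) 2).toSubmodule
      (f0 : FreeLieAlgebra k X →ₗ[k] M) (fun w hw => kills_D_two f0 h hw)
  have h1 : ∀ w, f1 (proj k X w) = f0 w := fun w => rfl
  refine ⟨{ f1 with map_lie' := ?_ }, ?_⟩
  · intro x y
    obtain ⟨x, rfl⟩ := proj_surj k X x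
    obtain ⟨y, rfl⟩ := proj_surj k X y
    change f1 _ = ⁅f1 _, f1 _⁆
    rw [← LieHom.map_lie, h1, h1, h1, LieHom.map_lie]
  · intro x
    change f1 (proj k X _) = _
    rw [h1]
    exact FreeLieAlgebra.lift_of_apply g x

theorem fm_metab {X : Type*} (a b c d : FreeMetabelianLie k X) : ⁅⁅a, b⁆, ⁅c, d⁆⁆ = 0 := by
  obtain ⟨a, rfl⟩ := proj_surj k X a
  obtain ⟨b, rfl⟩ := proj_surj k X b
  obtain ⟨c, rfl⟩ := proj_surj k X c
  obtain ⟨d, rfl⟩ := proj_surj k X d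
  simp only [← LieHom.map_lie]
  refine (LieSubmodule.Quotient.mk_eq_zero _).2 ?_
  rw [D_two]
  exact LieSubmodule.lie_mem_lie (lie_mem_D_one _ _) (lie_mem_D_one _ _)

theorem t_add_lie (a b c : k[X] ⊗[k] L) : ⁅a + b, c⁆ = ⁅a, c⁆ + ⁅b, c⁆ := add_lie a b c

theorem t_lie_add (a b c : k[X] ⊗[k] L) : ⁅a, b + c⁆ = ⁅a, b⁆ + ⁅a, c⁆ := lie_add a b c

theorem t_zero_lie (a : k[X] ⊗[k] L) : ⁅(0 : k[X] ⊗[k] L), a⁆ = 0 := zero_lie a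

theorem t_lie_zero (a : k[X] ⊗[k] L) : ⁅a, (0 : k[X] ⊗[k] L)⁆ = 0 := lie_zero a

theorem t_smul_lie_smul (p q : k[X]) (y z : k[X] ⊗[k] L) :
    ⁅p • y, q • z⁆ = (p * q) • ⁅y, z⁆ :=
  (smul_lie (R := k[X]) (L := k[X] ⊗[k] L) (M := k[X] ⊗[k] L) p y (q • z)).trans
    ((congrArg (fun t => p • t)
      (lie_smul (R := k[X]) (L := k[X] ⊗[k] L) (M := k[X] ⊗[k] L) q y z)).trans
        (smul_smul p q _))

theorem tensor_metab (h : ∀ a b c d : L, ⁅⁅a, b⁆, ⁅c, d⁆⁆ = 0) (a b c d : k[X] ⊗[k] L) :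
    ⁅⁅a, b⁆, ⁅c, d⁆⁆ = 0 := by
  induction a using TensorProduct.induction_on with
  | zero => simp only [t_zero_lie, t_lie_zero, map_zero, zero_lie, lie_zero]
  | add x y hx hy => simp only [t_add_lie, t_lie_add, map_add, hx, hy, add_zero, add_lie, lie_add]
  | tmul p a =>
  induction b using TensorProduct.induction_on with
  | zero => simp only [t_zero_lie, t_lie_zero, map_zero, zero_lie, lie_zero]
  | add x y hx hy => simp only [t_add_lie, t_lie_add, map_add, hx, hy, add_zero, add_lie, lie_add]
  | tmul q b =>
  induction c using TensorProduct.induction_on with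
  | zero => simp only [t_zero_lie, t_lie_zero, map_zero, zero_lie, lie_zero]
  | add x y hx hy => simp only [t_add_lie, t_lie_add, map_add, hx, hy, add_zero, add_lie, lie_add]
  | tmul r c =>
  induction d using TensorProduct.induction_on with
  | zero => simp only [t_zero_lie, t_lie_zero, map_zero, zero_lie, lie_zero]
  | add x y hx hy => simp only [t_add_lie, t_lie_add, map_add, hx, hy, add_zero, add_lie, lie_add]
  | tmul s d => simp [h]

/-- Apply a linear functional on polynomials to the coefficients. -/
noncomputable def app (l : k[X] →ₗ[k] k) : k[X] ⊗[k] L →ₗ[k] L :=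
  TensorProduct.lift ((LinearMap.lsmul k L).comp l)

@[simp] theorem app_tmul (l : k[X] →ₗ[k] k) (p : k[X]) (x : L) :
    app l (p ⊗ₜ[k] x) = l p • x := rfl

/-- Evaluation at one. -/
noncomputable def ev : k[X] →ₗ[k] k := (Polynomial.aeval (1 : k)).toLinearMap

theorem app_ev_lie (a b : k[X] ⊗[k] L) : app ev ⁅a, b⁆ = ⁅app ev a, app ev b⁆ := by
  induction a using TensorProduct.induction_on with
  | zero => simp only [t_zero_lie, t_lie_zero, map_zero, zero_lie, lie_zero]
  | add x y hx hy => simp only [t_add_lie, t_lie_add, map_add, hx, hy, add_zero, add_lie, lie_add]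
  | tmul p a =>
  induction b using TensorProduct.induction_on with
  | zero => simp only [t_zero_lie, t_lie_zero, map_zero, zero_lie, lie_zero]
  | add x y hx hy => simp only [t_add_lie, t_lie_add, map_add, hx, hy, add_zero, add_lie, lie_add]
  | tmul q b => 
    rw [LieAlgebra.ExtendScalars.bracket_tmul, app_tmul, app_tmul, app_tmul, smul_lie, lie_smul,
      smul_smul]
    simp [ev]

theorem ev_eq_sum (z : k[X] ⊗[k] L) : ∃ N : ℕ, ∀ n ≥ N,
    app ev z = ∑ i ∈ Finset.range n, app (Polynomial.lcoeff k i) z := by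
  induction z using TensorProduct.induction_on with
  | zero => exact ⟨0, by simp⟩
  | add x y hx hy =>
    obtain ⟨N, hN⟩ := hx
    obtain ⟨N', hN'⟩ := hy
    refine ⟨max N N', fun n hn => ?_⟩
    simp only [map_add, Finset.sum_add_distrib]
    rw [hN n (le_trans (le_max_left _ _) hn), hN' n (le_trans (le_max_right _ _) hn)]
  | tmul p x =>
    refine ⟨p.natDegree + 1, fun n hn => ?_⟩
    simp only [app_tmul, ← Finset.sum_smul, ev, AlgHom.toLinearMap_apply, Polynomial.lcoeff_apply]
    rw [Polynomial.aeval_eq_sum_range' (by omega : p.natDegree < n)]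
    simp

theorem coeff_X_pow (n i : ℕ) (hi : i < n) (y : k[X] ⊗[k] L) :
    app (Polynomial.lcoeff k i) ((X ^ n : k[X]) • y) = 0 := by
  induction y using TensorProduct.induction_on with
  | zero => simp
  | add x y hx hy => simp [hx, hy]
  | tmul p x =>
    rw [TensorProduct.smul_tmul', app_tmul, smul_eq_mul, Polynomial.lcoeff_apply,
      Polynomial.coeff_X_pow_mul', if_neg (by omega), zero_smul]

theorem resid_nilp {B : Type*} (w : FreeMetabelianLie k B)
    (hw : ∀ n, w ∈ LieModule.lowerCentralSeries k (FreeMetabelianLie k B)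
      (FreeMetabelianLie k B) n) : w = 0 := by
  obtain ⟨δ, hδ⟩ := exists_lift (k := k) (M := k[X] ⊗[k] FreeMetabelianLie k B)
    (tensor_metab fm_metab) (fun β : B => (X : k[X]) ⊗ₜ[k] fmGen k β)
  have hev : ∀ u, app ev (δ u) = u := by
    let K : LieSubalgebra k (FreeMetabelianLie k B) :=
      { LinearMap.eqLocus ((app ev).comp (δ : FreeMetabelianLie k B →ₗ[k] _)) LinearMap.id with
        lie_mem' := by
          intro x y hx hy
          change app ev (δ x) = x at hx
          change app ev (δ y) = y at hy
          change app ev (δ ⁅x, y⁆) = ⁅x, y⁆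
          rw [LieHom.map_lie, app_ev_lie, hx, hy] }
    refine fm_ind K (fun β => ?_)
    change app ev (δ _) = _
    rw [hδ]
    simp [ev]
  have h1 : ∀ u, ∃ y, δ u = (X : k[X]) • y := by
    let K : LieSubalgebra k (FreeMetabelianLie k B) :=
      { carrier := {u | ∃ y, δ u = (X : k[X]) • y}
        add_mem' := by
          rintro a b ⟨y, hy⟩ ⟨z, hz⟩
          exact ⟨y + z, by rw [map_add, hy, hz, smul_add]⟩
        zero_mem' := ⟨0, by simp⟩
        smul_mem' := by
          rintro t a ⟨y, hy⟩
          exact ⟨t • y, by rw [map_smul, hy, smul_comm]⟩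
        lie_mem' := by
          rintro a b ⟨y, hy⟩ ⟨z, hz⟩
          refine ⟨(X : k[X]) • ⁅y, z⁆, ?_⟩
          rw [LieHom.map_lie, hy, hz, smul_smul]
          exact t_smul_lie_smul _ _ _ _ }
    refine fm_ind K (fun β => ⟨(1 : k[X]) ⊗ₜ fmGen k β, ?_⟩)
    rw [hδ, TensorProduct.smul_tmul', smul_eq_mul, mul_one]
  have hn : ∀ n, ∀ u ∈ LieModule.lowerCentralSeries k (FreeMetabelianLie k B)
      (FreeMetabelianLie k B) n, ∃ y, δ u = (X ^ n : k[X]) • y := by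
    intro n
    induction n with
    | zero => exact fun u _ => ⟨δ u, by simp⟩
    | succ n ih =>
      intro u hu
      rw [LieModule.lowerCentralSeries_succ] at hu
      let S : Submodule k (FreeMetabelianLie k B) :=
        { carrier := {u | ∃ y, δ u = (X ^ (n + 1) : k[X]) • y}
          add_mem' := by
            rintro a b ⟨y, hy⟩ ⟨z, hz⟩
            exact ⟨y + z, by rw [map_add, hy, hz, smul_add]⟩
          zero_mem' := ⟨0, by simp⟩
          smul_mem' := by
            rintro t a ⟨y, hy⟩
            exact ⟨t • y, by rw [map_smul, hy, smul_comm]⟩ }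
      refine lie_span_ind S ?_ hu
      intro x _ v hv
      obtain ⟨y, hy⟩ := h1 x
      obtain ⟨z, hz⟩ := ih v hv
      refine ⟨⁅y, z⁆, ?_⟩
      rw [LieHom.map_lie, hy, hz, pow_succ']
      exact t_smul_lie_smul _ _ _ _
  rw [← hev w]
  obtain ⟨N, hN⟩ := ev_eq_sum (δ w)
  rw [hN N le_rfl]
  refine Finset.sum_eq_zero fun i hi => ?_
  obtain ⟨y, hy⟩ := hn N w (hw N)
  rw [hy, coeff_X_pow N i (Finset.mem_range.1 hi)]

theorem D_one_lcs (n : ℕ) (u v : L) (hu : u ∈ LieAlgebra.derivedSeries k L 1)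
    (hv : v ∈ LieModule.lowerCentralSeries k L L n) :
    ⁅u, v⁆ ∈ LieModule.lowerCentralSeries k L L (n + 2) := by
  rw [D_one] at hu
  let S : Submodule k L :=
    { carrier := {u | ⁅u, v⁆ ∈ LieModule.lowerCentralSeries k L L (n + 2)}
      add_mem' := by
        intro a b ha hb
        simp only [Set.mem_ofPred_eq] at ha hb ⊢
        rw [add_lie]
        exact add_mem ha hb
      zero_mem' := by simp
      smul_mem' := by
        intro t a ha
        simp only [Set.mem_ofPred_eq] at ha ⊢
        rw [smul_lie]
        exact SMulMemClass.smul_mem t ha }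
  have key : ∀ (m : ℕ) (x y : L), y ∈ LieModule.lowerCentralSeries k L L m →
      ⁅x, y⁆ ∈ LieModule.lowerCentralSeries k L L (m + 1) := by
    intro m x y hy
    rw [LieModule.lowerCentralSeries_succ]
    exact LieSubmodule.lie_mem_lie (LieSubmodule.mem_top x) hy
  refine lie_span_ind S ?_ hu
  intro x _ y _
  change ⁅⁅x, y⁆, v⁆ ∈ LieModule.lowerCentralSeries k L L (n + 2)
  rw [lie_lie]
  exact sub_mem (key _ _ _ (key _ _ _ hv)) (key _ _ _ (key _ _ _ hv))

theorem theta_lcs (θ : L →ₗ⁅k⁆ L) (h : ∀ u, θ u - u ∈ LieAlgebra.derivedSeries k L 1) (n : ℕ) :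
    ∀ u ∈ LieModule.lowerCentralSeries k L L n,
      θ u - u ∈ LieModule.lowerCentralSeries k L L (n + 1) := by
  induction n with
  | zero =>
    intro u _
    have := h u
    rw [D_one] at this
    rw [LieModule.lowerCentralSeries_succ, LieModule.lowerCentralSeries_zero]
    exact this
  | succ n ih =>
    intro u hu
    rw [LieModule.lowerCentralSeries_succ] at hu
    let S : Submodule k L := ((LieModule.lowerCentralSeries k L L (n + 1 + 1)).toSubmodule).comap
      ((θ : L →ₗ[k] L) - LinearMap.id)
    refine lie_span_ind S ?_ hu
    intro x _ v hv
    change θ ⁅x, v⁆ - ⁅x, v⁆ ∈ LieModule.lowerCentralSeries k L L (n + 1 + 1)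
    have e : θ ⁅x, v⁆ - ⁅x, v⁆ = ⁅θ x - x, (θ v - v) + v⁆ + ⁅x, θ v - v⁆ := by
      rw [LieHom.map_lie, sub_add_cancel, sub_lie, lie_sub]
      abel
    rw [e]
    have hv' := ih v hv
    refine add_mem (D_one_lcs n _ _ (h x) (add_mem ?_ hv)) ?_
    · exact LieModule.antitone_lowerCentralSeries k L L (Nat.le_succ n) hv'
    · rw [LieModule.lowerCentralSeries_succ]
      exact LieSubmodule.lie_mem_lie (LieSubmodule.mem_top x) hv'

theorem theta_inj {B : Type*} (θ : FreeMetabelianLie k B →ₗ⁅k⁆ FreeMetabelianLie k B)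
    (h : ∀ β, θ (fmGen k β) - fmGen k β ∈ LieAlgebra.derivedSeries k (FreeMetabelianLie k B) 1)
    (w : FreeMetabelianLie k B) (hw : θ w = 0) : w = 0 := by
  have h' : ∀ u, θ u - u ∈ LieAlgebra.derivedSeries k (FreeMetabelianLie k B) 1 := by
    let K : LieSubalgebra k (FreeMetabelianLie k B) :=
      { ((LieAlgebra.derivedSeries k (FreeMetabelianLie k B) 1).toSubmodule).comap
          ((θ : FreeMetabelianLie k B →ₗ[k] FreeMetabelianLie k B) - LinearMap.id) with
        lie_mem' := by
          intro x y _ _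
          change θ ⁅x, y⁆ - ⁅x, y⁆ ∈ LieAlgebra.derivedSeries k (FreeMetabelianLie k B) 1
          rw [LieHom.map_lie]
          exact sub_mem (lie_mem_D_one _ _) (lie_mem_D_one _ _) }
    exact fm_ind K h
  refine resid_nilp w fun n => ?_
  induction n with
  | zero => simp
  | succ n ih =>
    have := theta_lcs θ h' n w ih
    rw [hw, zero_sub] at this
    exact neg_mem_iff.1 this

end gen

end FMAux

open FMAux in
/-- A family of elements of a free metabelian Lie algebra whose images modulo the derived
ideal are linearly independent generates a free metabelian subalgebra: the Lie algebra
homomorphism from the free metabelian Lie algebra on the index type determined by the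
family is injective. -/
theorem injective_of_linearIndependent_mod_derived {k X B : Type*} [Field k]
    (b : B → FreeMetabelianLie k X)
    (hli : LinearIndependent k fun β : B =>
      LieSubmodule.Quotient.mk'
        (LieAlgebra.derivedSeries k (FreeMetabelianLie k X) 1) (b β))
    (φ : FreeMetabelianLie k B →ₗ⁅k⁆ FreeMetabelianLie k X)
    (hφ : ∀ β : B, φ (fmGen k β) = b β) :
    Function.Injective φ := by
  obtain ⟨g, hg⟩ := LinearMap.exists_leftInverse_of_injective _
    (LinearMap.ker_eq_bot.2 hli)
  let m : FreeMetabelianLie k X →ₗ[k] _ :=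
    (LieSubmodule.Quotient.mk' (LieAlgebra.derivedSeries k (FreeMetabelianLie k X) 1)).toLinearMap
  let c : FreeMetabelianLie k X →ₗ[k] FreeMetabelianLie k B :=
    (Finsupp.linearCombination k (fmGen k (X := B))).comp (g.comp m)
  have hm0 : ∀ x y : FreeMetabelianLie k X, c ⁅x, y⁆ = 0 := by
    intro x y
    have : m ⁅x, y⁆ = 0 := (LieSubmodule.Quotient.mk_eq_zero _).2 (lie_mem_D_one x y)
    simp only [c, LinearMap.comp_apply, this, map_zero]
  have hcb : ∀ β, c (b β) = fmGen k β := by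
    intro β
    have := LinearMap.congr_fun hg (Finsupp.single β 1)
    simp only [LinearMap.comp_apply, Finsupp.linearCombination_single, one_smul,
      LinearMap.id_apply] at this
    change Finsupp.linearCombination k (fmGen k (X := B)) (g _) = _
    erw [this]
    simp
  obtain ⟨ρ, hρ⟩ := exists_lift (k := k) (M := FreeMetabelianLie k B) fm_metab
    (fun x : X => c (fmGen k x))
  have hρc : ∀ u, ρ u - c u ∈ LieAlgebra.derivedSeries k (FreeMetabelianLie k B) 1 := by
    let K : LieSubalgebra k (FreeMetabelianLie k X) :=
      { ((LieAlgebra.derivedSeries k (FreeMetabelianLie k B) 1).toSubmodule).comap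
          ((ρ : FreeMetabelianLie k X →ₗ[k] FreeMetabelianLie k B) - c) with
        lie_mem' := by
          intro x y _ _
          change ρ ⁅x, y⁆ - c ⁅x, y⁆ ∈ LieAlgebra.derivedSeries k (FreeMetabelianLie k B) 1
          rw [LieHom.map_lie, hm0, sub_zero]
          exact lie_mem_D_one _ _ }
    refine fm_ind K fun x => ?_
    change ρ _ - c _ ∈ LieAlgebra.derivedSeries k (FreeMetabelianLie k B) 1
    rw [hρ, sub_self]
    exact zero_mem _
  rw [injective_iff_map_eq_zero]
  intro w hw
  refine theta_inj (ρ.comp φ) (fun β => ?_) w ?_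
  · have := hρc (b β)
    rw [hcb] at this
    rw [LieHom.comp_apply, hφ]
    exact this
  · rw [LieHom.comp_apply, hw, map_zero]
end

section
/- Let k be a field and Λ a type. Let F = F(k, Λ) be the free metabelian Lie algebra on Λ over k with generators a_α, let R = MvPolynomial Λ k, and let T = Λ →₀ R be the free R-module with basis (u_α)_{α ∈ Λ}. Equip M = R × T with the matrix metabelian Lie bracket ⁅(f,u),(g,v)⁆ = (0, g•u − f•v). Then the Lie algebra homomorphism γ : F → M determined by γ(a_α) = (X_α, u_α) (where X_α is the corresponding polynomial variable) is injective; hence the free metabelian Lie algebra embeds into a matrix metabelian Lie algebra. -/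
section MatLie

variable (R T : Type*) [CommRing R] [AddCommGroup T] [Module R T]

/-- The matrix metabelian Lie ring structure on `R × T`:
`⁅(f,u),(g,v)⁆ = (0, g•u − f•v)`. -/
instance matLieRing : LieRing (R × T) where
  bracket x y := (0, y.1 • x.2 - x.1 • y.2)
  add_lie x y z := by
    show (0, z.1 • (x.2 + y.2) - (x.1 + y.1) • z.2) =
      (0, z.1 • x.2 - x.1 • z.2) + (0, z.1 • y.2 - y.1 • z.2)
    ext
    · simp
    · simp only [smul_add, add_smul, Prod.snd_add]
      abel
  lie_add x y z := by
    show (0, (y.1 + z.1) • x.2 - x.1 • (y.2 + z.2)) =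
      (0, y.1 • x.2 - x.1 • y.2) + (0, z.1 • x.2 - x.1 • z.2)
    ext
    · simp
    · simp only [smul_add, add_smul, Prod.snd_add]
      abel
  lie_self x := by
    show (0, x.1 • x.2 - x.1 • x.2) = 0
    ext <;> simp
  leibniz_lie x y z := by
    show ((0:R), (0:R) • x.2 - x.1 • (z.1 • y.2 - y.1 • z.2)) =
      ((0:R), z.1 • (y.1 • x.2 - x.1 • y.2) - (0:R) • z.2) +
      ((0:R), (0:R) • y.2 - y.1 • (z.1 • x.2 - x.1 • z.2))
    ext
    · simp
    · simp only [smul_sub, smul_smul, mul_comm, zero_smul, Prod.snd_add]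
      abel

variable (k : Type*) [CommRing k] [Algebra k R] [Module k T]
  [IsScalarTower k R T] [SMulCommClass k R T]

/-- The matrix metabelian Lie algebra structure over `k` on `R × T`. -/
instance matLieAlgebra : LieAlgebra k (R × T) where
  lie_smul t x y := by
    show ((0:R), (t • y).1 • x.2 - x.1 • (t • y).2) = t • ((0:R), y.1 • x.2 - x.1 • y.2)
    ext
    · simp
    · show (t • y.1) • x.2 - x.1 • t • y.2 = t • (y.1 • x.2 - x.1 • y.2)
      rw [smul_sub, smul_assoc, smul_comm x.1 t y.2]

end MatLie

namespace FMProof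

lemma fs_ind {Λ : Type*} {P : (Λ →₀ ℕ) → Prop} (s : Λ →₀ ℕ) (zero : P 0)
    (add : ∀ s a, P s → P (s + Finsupp.single a 1)) : P s := by
  classical
  have : ∀ m : Multiset Λ, P (Multiset.toFinsupp m) := by
    intro m
    induction m using Multiset.induction_on with
    | empty => simpa using zero
    | cons a m ih =>
      rw [← Multiset.singleton_add, add_comm, Multiset.toFinsupp_add, Multiset.toFinsupp_singleton]
      exact add _ _ ih
  simpa using this (Finsupp.toMultiset s)

section

variable {k F Λ : Type*} [Field k] [LieRing F] [LieAlgebra k F]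

/-- span of brackets -/
def D (k F : Type*) [Field k] [LieRing F] [LieAlgebra k F] : Submodule k F :=
  Submodule.span k {x | ∃ a b : F, x = ⁅a, b⁆}

lemma lie_mem_D (a b : F) : ⁅a, b⁆ ∈ D k F := Submodule.subset_span ⟨a, b, rfl⟩

/-- bracket as an element of D -/
def br (a b : F) : D k F := ⟨⁅a, b⁆, lie_mem_D a b⟩

lemma D_comm (hm : ∀ a b c d : F, ⁅⁅a, b⁆, ⁅c, d⁆⁆ = 0) {x y : F} (hx : x ∈ D k F)
    (hy : y ∈ D k F) : ⁅x, y⁆ = 0 := by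
  induction hx using Submodule.span_induction with
  | mem x h =>
    obtain ⟨a, b, rfl⟩ := h
    induction hy using Submodule.span_induction with
    | mem y h => obtain ⟨c, d, rfl⟩ := h; exact hm _ _ _ _
    | zero => simp
    | add y z _ _ h1 h2 => simp [h1, h2]
    | smul t y _ h => simp [h]
  | zero => simp
  | add y z _ _ h1 h2 => simp [h1, h2]
  | smul t y _ h => simp [h]

/-- right bracket operator on D -/
def op (a : F) : D k F →ₗ[k] D k F where
  toFun c := ⟨⁅c.1, a⁆, lie_mem_D _ _⟩
  map_add' x y := by ext; simp
  map_smul' t x := by ext; simp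

lemma op_coe (a : F) (c : D k F) : (op a c : F) = ⁅(c : F), a⁆ := rfl

lemma op_comm (hm : ∀ a b c d : F, ⁅⁅a, b⁆, ⁅c, d⁆⁆ = 0) (a b : F) (c : D k F) :
    op a (op b c) = op b (op a c) := by
  ext
  simp only [op_coe]
  have h := D_comm (k := k) hm c.2 (lie_mem_D a b)
  have h2 := leibniz_lie (c : F) a b
  rw [h] at h2
  rw [← lie_skew _ a]
  exact (eq_neg_of_add_eq_zero_left h2.symm).symm

/-- monomial action -/
noncomputable def act (g : Λ → F) (s : Λ →₀ ℕ) : D k F →ₗ[k] D k F := by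
  classical
  exact (Finsupp.toMultiset s).toList.foldr (fun a T => (op (g a)) ∘ₗ T) LinearMap.id

lemma act_zero (g : Λ → F) : act (k := k) g 0 = LinearMap.id := by simp [act]

lemma act_add (hm : ∀ a b c d : F, ⁅⁅a, b⁆, ⁅c, d⁆⁆ = 0) (g : Λ → F) (s : Λ →₀ ℕ) (a : Λ) :
    act (k := k) g (s + Finsupp.single a 1) = op (g a) ∘ₗ act g s := by
  haveI : LeftCommutative (fun (a : Λ) (T : D k F →ₗ[k] D k F) => (op (g a)) ∘ₗ T) :=
    ⟨fun a b T => by ext c; simp [op_comm hm (g a) (g b)]⟩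
  have key : ∀ s, act (k := k) g s = (Finsupp.toMultiset s).foldr
      (fun a T => (op (g a)) ∘ₗ T) LinearMap.id := by
    intro s
    conv_rhs => rw [← Multiset.coe_toList (Finsupp.toMultiset s)]
    rw [Multiset.coe_foldr]
    rfl
  rw [key, key, add_comm]
  simp

lemma act_op (hm : ∀ a b c d : F, ⁅⁅a, b⁆, ⁅c, d⁆⁆ = 0) (g : Λ → F) (s : Λ →₀ ℕ) (a : Λ)
    (c : D k F) : act g s (op (g a) c) = op (g a) (act g s c) := by
  induction s using fs_ind with
  | zero => simp [act_zero]
  | add s b h => simp [act_add hm, h, op_comm hm (g b)]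

open Classical in
/-- coefficient map of the left inverse -/
noncomputable def val (k : Type*) {F Λ : Type*} [Field k] [LieRing F] [LieAlgebra k F]
    [LinearOrder Λ] (g : Λ → F) (α : Λ) (n : Λ →₀ ℕ) : D k F :=
  if h : ∃ p : Λ × (Λ →₀ ℕ), n = p.2 + Finsupp.single p.1 1 ∧ (∀ b ∈ p.2.support, p.1 ≤ b) ∧ p.1 < α
  then act g h.choose.2 (br (g α) (g h.choose.1)) else 0

lemma mem_supp {s : Λ →₀ ℕ} {a b : Λ} :
    b ∈ (s + Finsupp.single a 1).support ↔ b ∈ s.support ∨ b = a := by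
  classical
  by_cases h : b = a
  · subst h; simp
  · simp [h, Finsupp.single_apply, Ne.symm h]

lemma val_pos [LinearOrder Λ] (g : Λ → F) {α μ : Λ} {m : Λ →₀ ℕ}
    (h1 : ∀ b ∈ m.support, μ ≤ b) (h2 : μ < α) :
    val k g α (m + Finsupp.single μ 1) = act g m (br (g α) (g μ)) := by
  have h : ∃ p : Λ × (Λ →₀ ℕ), m + Finsupp.single μ 1 = p.2 + Finsupp.single p.1 1 ∧
      (∀ b ∈ p.2.support, p.1 ≤ b) ∧ p.1 < α := ⟨(μ, m), rfl, h1, h2⟩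
  rw [val, dif_pos h]
  obtain ⟨e, h3, h4⟩ := h.choose_spec
  generalize h.choose = p at *
  obtain ⟨ν, n⟩ := p
  simp only at *
  have hmn : μ = ν := by
    apply le_antisymm
    · have : ν ∈ (m + Finsupp.single μ 1).support := by rw [e, mem_supp]; simp
      rw [mem_supp] at this
      rcases this with h | h
      · exact h1 _ h
      · exact h.ge
    · have : μ ∈ (n + Finsupp.single ν 1).support := by rw [← e, mem_supp]; simp
      rw [mem_supp] at this
      rcases this with h | h
      · exact h3 _ h
      · exact h.ge
  subst hmn
  rw [add_right_cancel e]

lemma val_neg [LinearOrder Λ] (g : Λ → F) {α : Λ} {n : Λ →₀ ℕ}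
    (h1 : ∀ b ∈ n.support, α ≤ b) : val k g α n = 0 := by
  rw [val, dif_neg]
  rintro ⟨⟨μ, m⟩, rfl, h3, h4⟩
  exact absurd (h1 μ (by rw [mem_supp]; simp)) (not_le.2 h4)

lemma br_swap (a b : F) : br (k := k) a b = - br b a := by
  ext; simp [br]

lemma val_sub [LinearOrder Λ] (hm : ∀ a b c d : F, ⁅⁅a, b⁆, ⁅c, d⁆⁆ = 0) (g : Λ → F)
    {α β : Λ} (hab : β < α) (m : Λ →₀ ℕ) :
    val k g α (m + Finsupp.single β 1) - val k g β (m + Finsupp.single α 1) =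
      act g m (br (g α) (g β)) := by
  by_cases h : ∀ b ∈ m.support, β ≤ b
  · rw [val_pos g h hab, val_neg, sub_zero]
    intro b hb
    rw [mem_supp] at hb
    rcases hb with hb | rfl
    · exact h b hb
    · exact hab.le
  · push Not at h
    obtain ⟨b, hb, hbβ⟩ := h
    have hne : m.support.Nonempty := ⟨b, hb⟩
    set μ := m.support.min' hne with hμ
    have hμm : μ ∈ m.support := Finset.min'_mem _ _
    have hμb : ∀ c ∈ m.support, μ ≤ c := fun c hc => Finset.min'_le _ _ hc
    have hμβ : μ < β := (hμb b hb).trans_lt hbβ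
    obtain ⟨n, hn⟩ : ∃ n, m = n + Finsupp.single μ 1 := by
      refine ⟨m - Finsupp.single μ 1, (tsub_add_cancel_of_le ?_).symm⟩
      rw [Finsupp.single_le_iff]
      exact Nat.one_le_iff_ne_zero.2 (Finsupp.mem_support_iff.1 hμm)
    clear_value μ
    subst hn
    have hn : ∀ c ∈ n.support, μ ≤ c := fun c hc => hμb c (by rw [mem_supp]; exact Or.inl hc)
    have hx : ∀ γ, μ < γ → ∀ c ∈ (n + Finsupp.single γ 1).support, μ ≤ c := by
      intro γ hγ c hc
      rw [mem_supp] at hc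
      rcases hc with hc | rfl
      · exact hn c hc
      · exact hγ.le
    rw [add_right_comm, val_pos g (hx β hμβ) (hμβ.trans hab),
      add_right_comm n _ (Finsupp.single α 1), val_pos g (hx α (hμβ.trans hab)) hμβ]
    simp only [act_add hm, LinearMap.comp_apply, ← act_op hm]
    rw [← map_sub]
    congr 1
    ext
    simp only [Submodule.coe_sub, op_coe, br]
    have e1 : ⁅⁅g α, g μ⁆, g β⁆ = - ⁅g β, ⁅g α, g μ⁆⁆ := (lie_skew _ _).symm
    have e2 : ⁅⁅g β, g μ⁆, g α⁆ = ⁅g α, ⁅g μ, g β⁆⁆ := by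
      rw [← lie_skew _ (g α), ← lie_skew (g β) (g μ), lie_neg, neg_neg]
    have e3 : ⁅⁅g α, g β⁆, g μ⁆ = ⁅g μ, ⁅g β, g α⁆⁆ := by
      rw [← lie_skew _ (g μ), ← lie_skew (g α) (g β), lie_neg, neg_neg]
    have h := lie_jacobi (g α) (g μ) (g β)
    rw [e1, e2, e3, ← sub_eq_zero, ← neg_eq_zero, ← h]
    abel

/-- left inverse -/
noncomputable def psi (k : Type*) {F Λ : Type*} [Field k] [LieRing F] [LieAlgebra k F]
    [LinearOrder Λ] (g : Λ → F) : (Λ →₀ MvPolynomial Λ k) →ₗ[k] D k F :=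
  Finsupp.lsum k fun α => (MvPolynomial.basisMonomials Λ k).constr k (val k g α)

lemma psi_single [LinearOrder Λ] (g : Λ → F) (α : Λ) (n : Λ →₀ ℕ) :
    psi k g (Finsupp.single α (MvPolynomial.monomial n 1)) = val k g α n := by
  rw [psi, Finsupp.lsum_single]
  have := (MvPolynomial.basisMonomials Λ k).constr_basis k (val k g α) n
  simpa using this

lemma mat_lie (x y : MvPolynomial Λ k × (Λ →₀ MvPolynomial Λ k)) :
    ⁅x, y⁆ = (0, y.1 • x.2 - x.1 • y.2) := rfl

variable (γ : F →ₗ⁅k⁆ (MvPolynomial Λ k × (Λ →₀ MvPolynomial Λ k))) (g : Λ → F)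
  (hγ : ∀ α : Λ, γ (g α) = (MvPolynomial.X α, Finsupp.single α 1))
  (hm : ∀ a b c d : F, ⁅⁅a, b⁆, ⁅c, d⁆⁆ = 0)

include hγ hm

lemma gamma_act (m : Λ →₀ ℕ) (α β : Λ) : γ (act (k := k) g m (br (g α) (g β)) : D k F) =
    (0, Finsupp.single α (MvPolynomial.monomial (m + Finsupp.single β 1) 1) -
      Finsupp.single β (MvPolynomial.monomial (m + Finsupp.single α 1) 1)) := by
  induction m using fs_ind with
  | zero =>
    simp [act_zero, br, mat_lie, hγ, MvPolynomial.X]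
  | add m c ih =>
    rw [act_add hm, LinearMap.comp_apply, op_coe, LieHom.map_lie, ih, hγ, mat_lie]
    simp only [zero_smul, sub_zero, smul_sub, Finsupp.smul_single, smul_eq_mul, MvPolynomial.X,
      MvPolynomial.monomial_mul, one_mul]
    simp only [add_assoc, add_comm, add_left_comm]

lemma psi_gamma_act [LinearOrder Λ] (m : Λ →₀ ℕ) (α β : Λ) :
    psi k g (γ (act (k := k) g m (br (g α) (g β)) : D k F)).2 = act g m (br (g α) (g β)) := by
  rw [gamma_act γ g hγ hm]
  simp only [map_sub, psi_single]
  rcases lt_trichotomy α β with h | rfl | h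
  · rw [br_swap, map_neg, ← val_sub hm g h, neg_sub]
  · have : br (k := k) (g α) (g α) = 0 := by ext; simp [br]
    simp [this]
  · exact val_sub hm g h m

omit hγ in
lemma span_closed {x y : F}
    (hx : x ∈ Submodule.span k (Set.range g) ⊔ Submodule.span k
      (Set.range fun p : (Λ →₀ ℕ) × Λ × Λ => (act (k := k) g p.1 (br (g p.2.1) (g p.2.2)) : F)))
    (hy : y ∈ Submodule.span k (Set.range g) ⊔ Submodule.span k
      (Set.range fun p : (Λ →₀ ℕ) × Λ × Λ => (act (k := k) g p.1 (br (g p.2.1) (g p.2.2)) : F))) :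
    ⁅x, y⁆ ∈ Submodule.span k (Set.range g) ⊔ Submodule.span k
      (Set.range fun p : (Λ →₀ ℕ) × Λ × Λ => (act (k := k) g p.1 (br (g p.2.1) (g p.2.2)) : F)) := by
  have key : ∀ m α β c, ⁅(act (k := k) g m (br (g α) (g β)) : F), g c⁆ ∈ Submodule.span k
      (Set.range fun p : (Λ →₀ ℕ) × Λ × Λ =>
        (act (k := k) g p.1 (br (g p.2.1) (g p.2.2)) : F)) := by
    intro m α β c
    refine Submodule.subset_span ⟨(m + Finsupp.single c 1, α, β), ?_⟩
    simp [act_add hm, op_coe]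
  rw [← Submodule.span_union] at hx hy
  induction hx, hy using Submodule.span_induction₂ with
  | mem_mem x y hx hy =>
    apply Submodule.mem_sup_right
    rcases hx with ⟨a, rfl⟩ | ⟨⟨m, α, β⟩, rfl⟩ <;> rcases hy with ⟨b, rfl⟩ | ⟨⟨n, α', β'⟩, rfl⟩
    · refine Submodule.subset_span ⟨(0, a, b), ?_⟩
      simp [act_zero, br]
    · rw [← lie_skew]
      exact Submodule.neg_mem _ (key _ _ _ _)
    · exact key _ _ _ _
    · rw [D_comm (k := k) hm (Subtype.prop _) (Subtype.prop _)]
      exact Submodule.zero_mem _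
  | zero_left => simp
  | zero_right => simp
  | add_left x y z _ _ _ h1 h2 => rw [add_lie]; exact Submodule.add_mem _ h1 h2
  | add_right x y z _ _ _ h1 h2 => rw [lie_add]; exact Submodule.add_mem _ h1 h2
  | smul_left t x y _ _ h => rw [smul_lie]; exact Submodule.smul_mem _ _ h
  | smul_right t x y _ _ h => rw [lie_smul]; exact Submodule.smul_mem _ _ h

/-- Injectivity for any metabelian algebra generated by the images. -/
lemma inj (q : FreeLieAlgebra k Λ →ₗ⁅k⁆ F) (hq : Function.Surjective q)
    (hqg : ∀ a, q (FreeLieAlgebra.of k a) = g a) : Function.Injective γ := by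
  classical
  letI : LinearOrder Λ := linearOrderOfSTO (WellOrderingRel : Λ → Λ → Prop)
  let V : LieSubalgebra k F :=
    { Submodule.span k (Set.range g) ⊔ Submodule.span k
      (Set.range fun p : (Λ →₀ ℕ) × Λ × Λ =>
        (act (k := k) g p.1 (br (g p.2.1) (g p.2.2)) : F)) with
      lie_mem' := fun hx hy => span_closed g hm hx hy }
  have hgV : ∀ a, g a ∈ V := fun a =>
    Submodule.mem_sup_left (Submodule.subset_span ⟨a, rfl⟩)
  have hV : V.incl.comp (FreeLieAlgebra.lift k fun a => (⟨g a, hgV a⟩ : V)) = q := by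
    ext a
    simp [hqg]
  rw [injective_iff_map_eq_zero]
  intro x hx
  have hxV : x ∈ V := by
    obtain ⟨y, rfl⟩ := hq x
    rw [← hV]
    exact Subtype.prop _
  obtain ⟨u, hu, d, hd, rfl⟩ := Submodule.mem_sup.1 (show x ∈ Submodule.span k (Set.range g) ⊔ _ from hxV)
  have hd1 : (γ d).1 = 0 ∧ (psi k g (γ d).2 : F) = d := by
    clear hx hxV
    induction hd using Submodule.span_induction with
    | mem x h =>
      obtain ⟨⟨m, α, β⟩, rfl⟩ := h
      refine ⟨?_, ?_⟩
      · simp only [gamma_act γ g hγ hm]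
      · simp only [psi_gamma_act γ g hγ hm]
    | zero => simp
    | add y z _ _ h1 h2 => simp [h1, h2]
    | smul t y _ h => simp [h]
  have hu0 : u = 0 := by
    obtain ⟨c, rfl⟩ := (Finsupp.mem_span_range_iff_exists_finsupp).1 hu
    have h1 := congrArg Prod.fst hx
    rw [map_add, Prod.fst_add, hd1.1, add_zero, Finsupp.sum, map_sum, Prod.fst_sum] at h1
    simp only [map_smul, hγ, Prod.smul_fst] at h1
    have hc : c = 0 := by
      ext a
      have h2 := congrArg (MvPolynomial.coeff (Finsupp.single a 1)) h1
      simpa [MvPolynomial.coeff_sum, MvPolynomial.coeff_X, Finsupp.single_left_inj] using h2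
    simp [hc]
  subst hu0
  rw [zero_add] at hx ⊢
  rw [← hd1.2, hx]
  simp

end

end FMProof


/-- The free metabelian Lie algebra on `Λ` embeds into the matrix metabelian Lie algebra
`R × T` where `R = MvPolynomial Λ k` and `T = Λ →₀ R` is the free `R`-module on `Λ`: the
Lie algebra homomorphism sending the generator `a_α` to `(X_α, u_α)` is injective. -/
theorem freeMetabelian_embeds_matLie {k Λ : Type*} [Field k]
    (γ : FreeMetabelianLie k Λ →ₗ⁅k⁆ (MvPolynomial Λ k × (Λ →₀ MvPolynomial Λ k)))
    (hγ : ∀ α : Λ, γ (fmGen k α) = (MvPolynomial.X α, Finsupp.single α 1)) :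
    Function.Injective γ := by
  have hq : ∀ x y : FreeLieAlgebra k Λ, (LieSubmodule.Quotient.mk ⁅x, y⁆ : FreeMetabelianLie k Λ) =
      ⁅(LieSubmodule.Quotient.mk x : FreeMetabelianLie k Λ), LieSubmodule.Quotient.mk y⁆ :=
    fun x y => rfl
  let q : FreeLieAlgebra k Λ →ₗ⁅k⁆ FreeMetabelianLie k Λ :=
    { (LieSubmodule.Quotient.mk' (LieAlgebra.derivedSeries k (FreeLieAlgebra k Λ) 2) :
        FreeLieAlgebra k Λ →ₗ[k] FreeMetabelianLie k Λ) with
      map_lie' := fun {x y} => hq x y }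
  have hs : Function.Surjective q := LieSubmodule.Quotient.surjective_mk' _
  refine FMProof.inj γ (fmGen k) hγ ?_ q hs (fun a => rfl)
  intro a b c d
  obtain ⟨a, rfl⟩ := hs a
  obtain ⟨b, rfl⟩ := hs b
  obtain ⟨c, rfl⟩ := hs c
  obtain ⟨d, rfl⟩ := hs d
  simp only [← LieHom.map_lie]
  refine (LieSubmodule.Quotient.mk_eq_zero _).2 ?_
  have h1 : ∀ x y : FreeLieAlgebra k Λ, ⁅x, y⁆ ∈ LieAlgebra.derivedSeries k (FreeLieAlgebra k Λ) 1 :=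
    fun x y => LieSubmodule.lie_mem_lie (LieSubmodule.mem_top x) (LieSubmodule.mem_top y)
  exact LieSubmodule.lie_mem_lie (h1 a b) (h1 c d)
end
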